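/- Let f ∈ NZ be a constraint of arity k ≥ 2 with f ∉ DG. Then there exist two distinct indices i, j ∈ {1,…,k} and bits c_ℓ ∈ {0,1} for each ℓ ∈ {1,…,k}∖{i,j} such that the binary constraint h, obtained from f by pinning x_ℓ = c_ℓ for every ℓ ∉ {i,j}, satisfies h(0,0)·h(0,1)·h(1,0)·h(1,1) ≠ 0 and h(0,0)·h(1,1) ≠ h(0,1)·h(1,0). -/

import Mathlib

/-- A (complex-valued Boolean) constraint of arity `k`. -/
abbrev Constraint (k : ℕ) : Type := (Fin k → Bool) → ℂ

/-- The binary equality constraint `EQ = [1,0,1]`, as a two-argument function. -/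
def EQc : Bool → Bool → ℂ := fun a b => if a = b then 1 else 0

/-- The binary disequality constraint `XOR = [0,1,0]`, as a two-argument function. -/
def XORc : Bool → Bool → ℂ := fun a b => if a = b then 0 else 1

/-- The binary constraint `Implies = (1,1,0,1)`, as a two-argument function. -/
def IMPc : Bool → Bool → ℂ := fun a b => if a = true ∧ b = false then 0 else 1

/-- The unary constraint `[a, b]` (value `a` on input `0`, value `b` on input `1`). -/
def unC (a b : ℂ) : Constraint 1 := fun x => if x 0 then b else a

/-- The binary constraint `(a,b,c,d) = (f(0,0), f(0,1), f(1,0), f(1,1))`. -/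
def binC (a b c d : ℂ) : Constraint 2 := fun x =>
  if x 0 then (if x 1 then d else c) else (if x 1 then b else a)

/-- `OR = [0,1,1]`. -/
def ORc : Constraint 2 := binC 0 1 1 1

/-- `Implies = (1,1,0,1)` as a binary constraint. -/
def Impliesc : Constraint 2 := binC 1 1 0 1

/-- Membership in `NZ`: the constraint is everywhere nonzero. -/
def inNZ {k : ℕ} (f : Constraint k) : Prop := ∀ x, f x ≠ 0

/-- Membership in `DG`: the constraint is a product of unary constraints, one per variable. -/
def inDG {k : ℕ} (f : Constraint k) : Prop :=
  ∃ g : Fin k → Bool → ℂ, ∀ x, f x = ∏ i, g i (x i)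

/-- Membership in `ED`: the constraint is a product of at least one factor, each factor
being a unary constraint applied to some variable, or `EQ`/`XOR` applied to two variables. -/
def inED {k : ℕ} (f : Constraint k) : Prop :=
  ∃ (l1 l2 : ℕ) (h : Fin l1 → Bool → ℂ) (j : Fin l1 → Fin k)
    (g : Fin l2 → Bool → Bool → ℂ) (m n : Fin l2 → Fin k),
    1 ≤ l1 + l2 ∧ (∀ i, g i = EQc ∨ g i = XORc) ∧
    ∀ x, f x = (∏ i, h i (x (j i))) * ∏ i, g i (x (m i)) (x (n i))

/-- Membership in `IM`: `f ∉ NZ` and `f` is a product of at least one factor, each factor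
being a unary constraint applied to some variable, or `Implies` applied to two variables. -/
def inIM {k : ℕ} (f : Constraint k) : Prop :=
  ¬ inNZ f ∧
  ∃ (l1 l2 : ℕ) (h : Fin l1 → Bool → ℂ) (j : Fin l1 → Fin k)
    (m n : Fin l2 → Fin k),
    1 ≤ l1 + l2 ∧
    ∀ x, f x = (∏ i, h i (x (j i))) * ∏ i, IMPc (x (m i)) (x (n i))

/-- The underlying relation `R_f = {x : f x ≠ 0}` of a constraint `f`. -/
def relOf {k : ℕ} (f : Constraint k) : Set (Fin k → Bool) := {x | f x ≠ 0}

/-- Factors allowed in an IMP-style factorization of a relation: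
`Δ_c(x_i)` or `Implies(x_i, x_j)`. -/
inductive ImpFactor (k : ℕ) where
  | delta (c : Bool) (i : Fin k)
  | imp (i j : Fin k)
deriving DecidableEq

/-- Evaluation of an IMP-factor at an assignment. -/
def ImpFactor.eval {k : ℕ} : ImpFactor k → (Fin k → Bool) → Bool
  | .delta c i, x => x i == c
  | .imp i j, x => !(x i) || x j

/-- `L` is a factor list for the relation `R`: the conjunction of the factors in `L` equals `R`. -/
def isFactorListFor {k : ℕ} (L : List (ImpFactor k)) (R : Set (Fin k → Bool)) : Prop :=
  ∀ x, x ∈ R ↔ ∀ fac ∈ L, fac.eval x = true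

/-- Membership in `IMP`: the relation is the conjunction of a positive number of factors of the
forms `Δ_0(x)`, `Δ_1(x)`, `Implies(x,y)`. -/
def inIMP {k : ℕ} (R : Set (Fin k → Bool)) : Prop :=
  ∃ L : List (ImpFactor k), L ≠ [] ∧ isFactorListFor L R

/-- `f` has imp support when `R_f ∈ IMP`. -/
def hasImpSupport {k : ℕ} (f : Constraint k) : Prop := inIMP (relOf f)

/-- A factor list is imp-distinctive if no variable occurs both in a `Δ_c` factor and in an
`Implies` factor, and no factor `Implies(x,x)` occurs. -/
def impDistinctive {k : ℕ} (L : List (ImpFactor k)) : Prop :=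
  (∀ i : Fin k, ¬ ((∃ c, ImpFactor.delta c i ∈ L) ∧
      (∃ j, ImpFactor.imp i j ∈ L ∨ ImpFactor.imp j i ∈ L))) ∧
  (∀ i : Fin k, ImpFactor.imp i i ∉ L)

/-- Factors of the forms `Δ_c(x_i)` or `EQ(x_i,x_j)`. -/
inductive EqFactor (k : ℕ) where
  | delta (c : Bool) (i : Fin k)
  | eq (i j : Fin k)
deriving DecidableEq

/-- Evaluation of such a factor at an assignment. -/
def EqFactor.eval {k : ℕ} : EqFactor k → (Fin k → Bool) → Bool
  | .delta c i, x => x i == c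
  | .eq i j, x => x i == x j

/-- `f` is in simple form: its representing Boolean matrix (rows indexed by `R_f`) has
no all-`0` column, no all-`1` column, and no two identical columns. -/
def simpleForm {k : ℕ} (f : Constraint k) : Prop :=
  (∀ i : Fin k, ∃ a, f a ≠ 0 ∧ a i = true) ∧
  (∀ i : Fin k, ∃ a, f a ≠ 0 ∧ a i = false) ∧
  (∀ i j : Fin k, i ≠ j → ∃ a, f a ≠ 0 ∧ a i ≠ a j)

/-- A constraint of unspecified arity. -/
abbrev Ctr : Type := Σ k : ℕ, Constraint k

/-- T-constructibility of a constraint from a set `G` of constraints, by finitely many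
applications of permutation, pinning, projection, linking, expansion, multiplication,
and normalization. -/
inductive TCon (G : Set Ctr) : Ctr → Prop where
  | base {c : Ctr} : c ∈ G → TCon G c
  | perm {k : ℕ} {g : Constraint k} (σ : Equiv.Perm (Fin k)) :
      TCon G ⟨k, g⟩ → TCon G ⟨k, fun x => g (fun i => x (σ i))⟩
  | pinning {k : ℕ} {g : Constraint (k+1)} (i : Fin (k+1)) (c : Bool) :
      TCon G ⟨k+1, g⟩ → TCon G ⟨k, fun x => g (i.insertNth c x)⟩
  | proj {k : ℕ} {g : Constraint (k+1)} (i : Fin (k+1)) :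
      TCon G ⟨k+1, g⟩ →
      TCon G ⟨k, fun x => g (i.insertNth false x) + g (i.insertNth true x)⟩
  | link {k : ℕ} {g : Constraint (k+1)} (i : Fin (k+1)) (j : Fin k) :
      TCon G ⟨k+1, g⟩ → TCon G ⟨k, fun x => g (i.insertNth (x j) x)⟩
  | expand {k : ℕ} {g : Constraint k} (i : Fin (k+1)) :
      TCon G ⟨k, g⟩ → TCon G ⟨k+1, fun x => g (fun j => x (i.succAbove j))⟩
  | mul {k : ℕ} {g₁ g₂ : Constraint k} :
      TCon G ⟨k, g₁⟩ → TCon G ⟨k, g₂⟩ → TCon G ⟨k, fun x => g₁ x * g₂ x⟩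
  | norm {k : ℕ} {g : Constraint k} (lam : ℂ) (hlam : lam ≠ 0) :
      TCon G ⟨k, g⟩ → TCon G ⟨k, fun x => lam * g x⟩

/-- T-constructibility using no projection operation. -/
inductive TConNoProj (G : Set Ctr) : Ctr → Prop where
  | base {c : Ctr} : c ∈ G → TConNoProj G c
  | perm {k : ℕ} {g : Constraint k} (σ : Equiv.Perm (Fin k)) :
      TConNoProj G ⟨k, g⟩ → TConNoProj G ⟨k, fun x => g (fun i => x (σ i))⟩
  | pinning {k : ℕ} {g : Constraint (k+1)} (i : Fin (k+1)) (c : Bool) :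
      TConNoProj G ⟨k+1, g⟩ → TConNoProj G ⟨k, fun x => g (i.insertNth c x)⟩
  | link {k : ℕ} {g : Constraint (k+1)} (i : Fin (k+1)) (j : Fin k) :
      TConNoProj G ⟨k+1, g⟩ → TConNoProj G ⟨k, fun x => g (i.insertNth (x j) x)⟩
  | expand {k : ℕ} {g : Constraint k} (i : Fin (k+1)) :
      TConNoProj G ⟨k, g⟩ → TConNoProj G ⟨k+1, fun x => g (fun j => x (i.succAbove j))⟩
  | mul {k : ℕ} {g₁ g₂ : Constraint k} :
      TConNoProj G ⟨k, g₁⟩ → TConNoProj G ⟨k, g₂⟩ →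
      TConNoProj G ⟨k, fun x => g₁ x * g₂ x⟩
  | norm {k : ℕ} {g : Constraint k} (lam : ℂ) (hlam : lam ≠ 0) :
      TConNoProj G ⟨k, g⟩ → TConNoProj G ⟨k, fun x => lam * g x⟩

/-- Pinning the `i`-th variable of `f` to the bit `c`. -/
def pinC {k : ℕ} (f : Constraint (k+1)) (i : Fin (k+1)) (c : Bool) : Constraint k :=
  fun x => f (i.insertNth c x)

/-- `R_f` admits a good factor list: a factor list consisting only of `Implies` factors,
in which every variable is incident to at least one edge of the induced imp graph,
and whose imp graph has no (directed) cycle. -/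
def hasGoodFactorList {k : ℕ} (f : Constraint k) : Prop :=
  ∃ L : List (ImpFactor k),
    isFactorListFor L (relOf f) ∧
    (∀ fac ∈ L, ∃ i j, fac = ImpFactor.imp i j) ∧
    (∀ i : Fin k, ∃ j, ImpFactor.imp i j ∈ L ∨ ImpFactor.imp j i ∈ L) ∧
    ¬ ∃ i : Fin k, Relation.TransGen (fun a b => ImpFactor.imp a b ∈ L) i i

/-!
If every binary section of a nowhere-vanishing `f` has rank one, then changing the value of one
variable multiplies `f` by a factor that does not depend on any other variable: the others can be
altered one at a time. Moving from a base point `o` to `x` one coordinate at a time therefore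
exhibits `f x` as `f o` times a product of unary factors. Contrapositively, an `f` that is not such
a product has a binary section of rank greater than one.
-/

/-- A two-variable function all of whose 2 × 2 minors vanish, i.e. whose matrix of values has rank
at most one. The vanishing is stated without subtraction, as `M` need not have an addition. -/
def IsRankOne {β γ M : Type*} [Mul M] (h : β → γ → M) : Prop :=
  ∀ a a' b b', h a b * h a' b' = h a b' * h a' b

theorem isRankOne_bool_iff {M : Type*} [CommMagma M] {h : Bool → Bool → M} :
    IsRankOne h ↔ h false false * h true true = h false true * h true false := by
  refine ⟨fun H => H false true false true, fun H => ?_⟩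
  rintro (_ | _) (_ | _) (_ | _) (_ | _) <;> simp only [mul_comm, H]

section UnaryProduct

variable {ι : Type*} {α : ι → Type*} [Fintype ι]

/-- A function of several variables that is a product of unary functions, one per variable. For
Boolean variables and complex values this is membership in `DG`. -/
def IsUnaryProduct {M : Type*} [CommMonoid M] (f : (∀ i, α i) → M) : Prop :=
  ∃ g : ∀ i, α i → M, ∀ x, f x = ∏ i, g i (x i)

theorem IsUnaryProduct.of_eq_const_mul_prod {M : Type*} [CommMonoid M] [Nonempty ι]
    {f : (∀ i, α i) → M} (c : M) (g : ∀ i, α i → M) (hfg : ∀ x, f x = c * ∏ i, g i (x i)) :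
    IsUnaryProduct f := by
  classical
  let i₀ : ι := Classical.arbitrary ι
  refine ⟨fun i a => (if i = i₀ then c else 1) * g i a, fun x => ?_⟩
  rw [hfg, Finset.prod_mul_distrib, Fintype.prod_ite_eq']

end UnaryProduct

section BinarySection

variable {ι : Type*} {α : ι → Type*} [DecidableEq ι]

/-- The binary function obtained from `f` by pinning every variable other than `i` and `j` to its
value in `c`. The values of `c` at `i` and `j` are ignored. -/
def binarySection {M : Type*} (f : (∀ i, α i) → M) (i j : ι) (c : ∀ i, α i) (a : α i) (b : α j) :
    M :=
  f (Function.update (Function.update c j b) i a)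

theorem binarySection_eq_ite {β M : Type*} (f : (ι → β) → M) (i j : ι) (c : ι → β) (a b : β) :
    binarySection f i j c a b = f (fun t => if t = i then a else if t = j then b else c t) := by
  refine congrArg f (funext fun t => ?_)
  simp only [Function.update_apply]

variable {G₀ : Type*} [CommGroupWithZero G₀] {f : (∀ i, α i) → G₀}

theorem div_update_eq_div_update_update {i j : ι} {x : ∀ i, α i} (hf : ∀ x, f x ≠ 0)
    (hrank : IsRankOne (binarySection f i j x)) (a a' : α i) (b : α j) :
    f (Function.update x i a) / f (Function.update x i a') =
      f (Function.update (Function.update x j b) i a) /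
        f (Function.update (Function.update x j b) i a') := by
  rw [div_eq_div_iff (hf _) (hf _)]
  simpa only [binarySection, Function.update_eq_self] using hrank a a' (x j) b

theorem div_update_eq_div_update [Finite ι] (hf : ∀ x, f x ≠ 0)
    (hrank : ∀ i j c, i ≠ j → IsRankOne (binarySection f i j c)) (i : ι) (a a' : α i)
    (x y : ∀ i, α i) :
    f (Function.update x i a) / f (Function.update x i a') =
      f (Function.update y i a) / f (Function.update y i a') := by
  cases nonempty_fintype ι
  suffices h : ∀ s : Finset ι, f (Function.update x i a) / f (Function.update x i a') =
      f (Function.update (s.piecewise y x) i a) / f (Function.update (s.piecewise y x) i a') by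
    simpa only [Finset.piecewise_univ] using h Finset.univ
  intro s
  induction s using Finset.induction_on with
  | empty => rw [Finset.piecewise_empty]
  | insert j s _ ih =>
    rw [ih, Finset.piecewise_insert]
    obtain rfl | hij := eq_or_ne i j
    · simp only [Function.update_idem]
    · exact div_update_eq_div_update_update hf (hrank i j _ hij) a a' (y j)

variable [Fintype ι]

theorem eq_mul_prod_div_update (hf : ∀ x, f x ≠ 0)
    (hrank : ∀ i j c, i ≠ j → IsRankOne (binarySection f i j c)) (o x : ∀ i, α i) :
    f x = f o * ∏ i, f (Function.update o i (x i)) / f o := by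
  suffices h : ∀ s : Finset ι,
      f (s.piecewise x o) = f o * ∏ i ∈ s, f (Function.update o i (x i)) / f o by
    simpa only [Finset.piecewise_univ] using h Finset.univ
  intro s
  induction s using Finset.induction_on with
  | empty => rw [Finset.piecewise_empty, Finset.prod_empty, mul_one]
  | insert j s hj ih =>
    set z := s.piecewise x o with hz
    have hzj : Function.update z j (o j) = z := by
      rw [Function.update_eq_self_iff, hz, Finset.piecewise_eq_of_notMem _ _ _ hj]
    have hratio : f (Function.update z j (x j)) / f z = f (Function.update o j (x j)) / f o := by
      simpa only [hzj, Function.update_eq_self] using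
        div_update_eq_div_update hf hrank j (x j) (o j) z o
    calc f ((insert j s).piecewise x o)
        = f (Function.update z j (x j)) / f z * f z := by
          rw [Finset.piecewise_insert, div_mul_cancel₀ _ (hf z)]
      _ = f o * ∏ i ∈ insert j s, f (Function.update o i (x i)) / f o := by
          rw [hratio, ih, Finset.prod_insert hj, mul_left_comm]

theorem isUnaryProduct_of_forall_isRankOne [Nonempty ι] (hf : ∀ x, f x ≠ 0)
    (hrank : ∀ i j c, i ≠ j → IsRankOne (binarySection f i j c)) : IsUnaryProduct f := by
  obtain hα | ⟨⟨o⟩⟩ := isEmpty_or_nonempty (∀ i, α i)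
  · exact ⟨fun _ _ => 1, fun x => hα.elim x⟩
  · exact .of_eq_const_mul_prod (f o) (fun i a => f (Function.update o i a) / f o)
      (eq_mul_prod_div_update hf hrank o)

end BinarySection

theorem stmt15_general {ι : Type*} [Fintype ι] [DecidableEq ι] [Nonempty ι] {α : ι → Type*}
    {G₀ : Type*} [CommGroupWithZero G₀] (f : (∀ i, α i) → G₀) (hf : ∀ x, f x ≠ 0)
    (hprod : ¬ IsUnaryProduct f) :
    ∃ (i j : ι) (c : ∀ i, α i), i ≠ j ∧ ¬ IsRankOne (binarySection f i j c) := by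
  contrapose! hprod
  exact isUnaryProduct_of_forall_isRankOne hf hprod

/-- For `f ∈ NZ` of arity `k ≥ 2` with `f ∉ DG`, there are distinct indices
`i ≠ j` and bits `c_ℓ` for the other coordinates such that the binary constraint `h`
obtained by pinning every other variable satisfies `h(0,0)h(0,1)h(1,0)h(1,1) ≠ 0` and
`h(0,0)h(1,1) ≠ h(0,1)h(1,0)`. -/
theorem stmt15 (k : ℕ) (hk : 2 ≤ k) (f : Constraint k) (hnz : inNZ f) (hdg : ¬ inDG f) :
    ∃ (i j : Fin k) (c : Fin k → Bool) (h : Bool → Bool → ℂ),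
      i ≠ j ∧
      (∀ a b, h a b = f (fun t => if t = i then a else if t = j then b else c t)) ∧
      h false false * h false true * h true false * h true true ≠ 0 ∧
      h false false * h true true ≠ h false true * h true false := by
  have : Nonempty (Fin k) := ⟨⟨0, by omega⟩⟩
  obtain ⟨i, j, c, hij, hc⟩ := stmt15_general f hnz hdg
  exact ⟨i, j, c, binarySection f i j c, hij, binarySection_eq_ite f i j c,
    by simp [binarySection, hnz _], mt isRankOne_bool_iff.mpr hc⟩
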